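/- Let 𝒴, 𝒳, 𝒲 be standard Borel spaces, μ a probability measure on 𝒴 × 𝒲, g : 𝒴 → 𝒳 a measurable map, and R a probability measure on 𝒲. Let μ' be the pushforward of μ under (y, w) ↦ (g(y), w). Let κ_Y be the disintegration kernel of μ (the conditional law of the second coordinate given the first) and κ_X the disintegration kernel of μ'. Then coarsening the conditioning does not increase conditional relative entropy: ∫_𝒳 D(κ_X(x) ‖ R) d(μ'∘fst⁻¹)(x) ≤ ∫_𝒴 D(κ_Y(y) ‖ R) d(μ∘fst⁻¹)(y), with both sides valued in [0,∞]. -/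

import Mathlib

open MeasureTheory ProbabilityTheory
open scoped ENNReal ProbabilityTheory Classical

/-- Kullback-Leibler divergence `D(P ‖ Q)`, valued in `[0,∞]`.  For probability measures with
`P ≪ Q` it equals `∫ log (dP/dQ) dP`, computed here in the equivalent nonnegative form
`∫⁻ (φ log φ - φ + 1) dQ` where `φ = dP/dQ`; it is `∞` when `¬ P ≪ Q`. -/
noncomputable def klDiv {α : Type*} [MeasurableSpace α] (P Q : Measure α) : ℝ≥0∞ :=
  if P ≪ Q then
    ∫⁻ x, ENNReal.ofReal ((P.rnDeriv Q x).toReal * Real.log (P.rnDeriv Q x).toReal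
      - (P.rnDeriv Q x).toReal + 1) ∂Q
  else ∞

/-- The `t`-step state transition maps: `F 0 (x, _) = x` and
`F (k+1) (x, w₀, …, w_k) = f (F k (x, w₀, …, w_{k-1}), w_k)`. -/
def stateTrans {𝒳 𝒲 : Type*} (f : 𝒳 × 𝒲 → 𝒳) : (t : ℕ) → 𝒳 × (Fin t → 𝒲) → 𝒳
  | 0, p => p.1
  | t + 1, p => f (stateTrans f t (p.1, fun i => p.2 i.castSucc), p.2 (Fin.last t))

lemma klDiv_eq_mathlib {α : Type*} [MeasurableSpace α] (P Q : Measure α)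
    [IsFiniteMeasure P] [IsFiniteMeasure Q] :
    klDiv P Q = InformationTheory.klDiv P Q := by
  rw [InformationTheory.klDiv_eq_lintegral_klFun, klDiv]
  congr 1
  refine lintegral_congr fun x => ?_
  congr 1
  rw [InformationTheory.klFun_apply]
  ring

/-- The averaged divergence of a kernel from a fixed measure is a divergence of joint laws. -/
lemma lintegral_klDiv_eq {α β : Type*} [MeasurableSpace α] [MeasurableSpace β]
    [MeasurableSpace.CountableOrCountablyGenerated α β]
    (ν : Measure α) [IsProbabilityMeasure ν] (R : Measure β) [IsProbabilityMeasure R]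
    (κ : Kernel α β) [IsMarkovKernel κ] :
    ∫⁻ x, klDiv (κ x) R ∂ν = InformationTheory.klDiv (ν ⊗ₘ κ) (ν.prod R) := by
  rw [← Measure.compProd_const]
  set η : Kernel α β := Kernel.const α R with hη
  have hηx : ∀ x, η x = R := fun x => by simp [hη]
  by_cases h : ∀ᵐ a ∂ν, κ a ≪ η a
  · have hac : ν ⊗ₘ κ ≪ ν ⊗ₘ η := Measure.absolutelyContinuous_compProd_right_iff.mpr h
    have hm := Kernel.measurable_rnDeriv κ η
    have heq : ν ⊗ₘ κ = (ν ⊗ₘ η).withDensity (fun p => κ.rnDeriv η p.1 p.2) := by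
      rw [← Measure.compProd_withDensity hm]
      refine Measure.compProd_congr ?_
      filter_upwards [h] with a ha using (Kernel.withDensity_rnDeriv_eq ha).symm
    have hrn : (ν ⊗ₘ κ).rnDeriv (ν ⊗ₘ η) =ᵐ[ν ⊗ₘ η] fun p => κ.rnDeriv η p.1 p.2 := by
      conv_lhs => rw [heq]
      exact Measure.rnDeriv_withDensity _ hm
    rw [InformationTheory.klDiv_eq_lintegral_klFun_of_ac hac]
    have h1 : ∫⁻ p, ENNReal.ofReal
          (InformationTheory.klFun ((ν ⊗ₘ κ).rnDeriv (ν ⊗ₘ η) p).toReal) ∂(ν ⊗ₘ η)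
        = ∫⁻ p, ENNReal.ofReal
          (InformationTheory.klFun (κ.rnDeriv η p.1 p.2).toReal) ∂(ν ⊗ₘ η) := by
      refine lintegral_congr_ae ?_
      filter_upwards [hrn] with p hp
      rw [hp]
    rw [h1, Measure.lintegral_compProd (by fun_prop)]
    refine lintegral_congr_ae ?_
    filter_upwards [h] with a ha
    rw [klDiv_eq_mathlib, ← hηx a, InformationTheory.klDiv_eq_lintegral_klFun_of_ac ha]
    refine lintegral_congr_ae ?_
    filter_upwards [Kernel.rnDeriv_eq_rnDeriv_measure (κ := κ) (η := η) (a := a)] with w hw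
    rw [hw]
  · have hac : ¬ (ν ⊗ₘ κ ≪ ν ⊗ₘ η) := fun h' =>
      h (Measure.absolutelyContinuous_compProd_right_iff.mp h')
    rw [InformationTheory.klDiv_of_not_ac hac]
    have hS := (Kernel.measurableSet_absolutelyContinuous κ η).compl
    have hpos : ν {a | κ a ≪ η a}ᶜ ≠ 0 := h
    refine top_le_iff.mp ?_
    calc ∞ = ∫⁻ _ in {a | κ a ≪ η a}ᶜ, ∞ ∂ν := by
          rw [setLIntegral_const, ENNReal.top_mul hpos]
      _ ≤ ∫⁻ x in {a | κ a ≪ η a}ᶜ, klDiv (κ x) R ∂ν := by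
          refine setLIntegral_mono' hS fun x hx => ?_
          have hx' : ¬ (κ x ≪ R) := by simpa [hηx] using hx
          simp [klDiv, hx']
      _ ≤ ∫⁻ x, klDiv (κ x) R ∂ν := setLIntegral_le_lintegral _ _

/-- Coarsening the conditioning does not increase the conditional relative entropy:
if `μ'` is the pushforward of `μ` under `(y, w) ↦ (g y, w)`, and `κY`, `κX` are the
disintegration kernels of `μ` and `μ'`, then
`∫ D(κX(x) ‖ R) d(μ'∘fst⁻¹) ≤ ∫ D(κY(y) ‖ R) d(μ∘fst⁻¹)`. -/
theorem coarsening_decreases_conditional_relative_entropy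
    {𝒴 𝒳 𝒲 : Type*} [MeasurableSpace 𝒴] [StandardBorelSpace 𝒴]
    [MeasurableSpace 𝒳] [StandardBorelSpace 𝒳]
    [MeasurableSpace 𝒲] [StandardBorelSpace 𝒲]
    (μ : Measure (𝒴 × 𝒲)) [IsProbabilityMeasure μ]
    (g : 𝒴 → 𝒳) (hg : Measurable g)
    (R : Measure 𝒲) [IsProbabilityMeasure R]
    (κY : Kernel 𝒴 𝒲) [IsMarkovKernel κY] (hκY : μ.fst ⊗ₘ κY = μ)
    (κX : Kernel 𝒳 𝒲) [IsMarkovKernel κX]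
    (hκX : (μ.map fun p => (g p.1, p.2)).fst ⊗ₘ κX = μ.map fun p => (g p.1, p.2)) :
    ∫⁻ x, klDiv (κX x) R ∂(μ.map fun p => (g p.1, p.2)).fst
      ≤ ∫⁻ y, klDiv (κY y) R ∂μ.fst := by
  have hG : Measurable (fun p : 𝒴 × 𝒲 => (g p.1, p.2)) := by fun_prop
  have : IsProbabilityMeasure (μ.map fun p : 𝒴 × 𝒲 => (g p.1, p.2)) :=
    Measure.isProbabilityMeasure_map hG.aemeasurable
  rw [lintegral_klDiv_eq, lintegral_klDiv_eq, hκX, hκY]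
  have hfst : (μ.map fun p : 𝒴 × 𝒲 => (g p.1, p.2)).fst = μ.fst.map g := by
    rw [Measure.fst, Measure.fst, Measure.map_map measurable_fst hG,
      Measure.map_map hg measurable_fst]
    rfl
  have hprod : (μ.map fun p : 𝒴 × 𝒲 => (g p.1, p.2)).fst.prod R
      = (μ.fst.prod R).map (fun p : 𝒴 × 𝒲 => (g p.1, p.2)) := by
    rw [hfst]
    have := Measure.map_prod_map μ.fst R hg measurable_id
    rw [Measure.map_id] at this
    exact this
  rw [hprod]
  exact InformationTheory.klDiv_map_le _ _ hG
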